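/- arXiv:1509.05745 — 4 statements merged into one kernel-verified Lean document; each statement's English description precedes it below -/
import Mathlib

section
/- For every prime p, the minimal period of the Narayana sequence modulo p is at most p³ − 1. -/
/-!
The triple `(u n, u (n + 1), u (n + 2))` modulo `p` evolves by an injective map `narayanaStep` of
`(ZMod p)³` fixing `0`. As the initial triple is nonzero, its whole orbit stays among the `p ^ 3 - 1`
nonzero triples, so two of the first `p ^ 3` triples coincide (pigeonhole). Injectivity cancels the
common initial steps, so the orbit returns to its starting point after at most `p ^ 3 - 1` steps.
-/

/-- The Narayana sequence: u₀ = 0, u₁ = 1, u₂ = 1, u_{n+3} = u_{n+2} + u_n. -/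
def narayana : ℕ → ℕ
  | 0 => 0
  | 1 => 1
  | 2 => 1
  | n + 3 => narayana (n + 2) + narayana n

/-- The shift of three consecutive terms of the Narayana recurrence, as a self-map of triples of
residues modulo `p`. -/
def narayanaStep (p : ℕ) (x : ZMod p × ZMod p × ZMod p) : ZMod p × ZMod p × ZMod p :=
  (x.2.1, x.2.2, x.2.2 + x.1)

theorem narayanaStep_injective (p : ℕ) : Function.Injective (narayanaStep p) := by
  rintro ⟨a, b, c⟩ ⟨a', b', c'⟩ h
  simp only [narayanaStep, Prod.mk.injEq] at h ⊢
  obtain ⟨rfl, rfl, h⟩ := h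
  exact ⟨add_left_cancel h, rfl, rfl⟩

theorem narayanaStep_iterate (p n : ℕ) :
    (narayanaStep p)^[n] (0, 1, 1) =
      ((narayana n : ZMod p), (narayana (n + 1) : ZMod p), (narayana (n + 2) : ZMod p)) := by
  induction n with
  | zero => simp [narayana]
  | succ n ih =>
    rw [Function.iterate_succ_apply', ih]
    simp [narayanaStep, narayana]

theorem narayanaStep_iterate_ne_zero (p : ℕ) [Fact p.Prime] (n : ℕ) :
    (narayanaStep p)^[n] (0, 1, 1) ≠ 0 := by
  intro h
  have h0 : (narayanaStep p)^[n] 0 = 0 :=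
    Function.iterate_fixed (by simp [narayanaStep]) n
  have := (narayanaStep_injective p).iterate n (h.trans h0.symm)
  simp at this

/-- The minimal period of the Narayana sequence modulo a prime p is at most p³ − 1. -/
theorem narayana_minimal_period_le (p : ℕ) (hp : p.Prime) (k : ℕ)
    (hk : IsLeast {k | 0 < k ∧ ∀ n, narayana (n + k) ≡ narayana n [MOD p]} k) :
    k ≤ p ^ 3 - 1 := by
  have : Fact p.Prime := ⟨hp⟩
  have hcard : ((Finset.univ : Finset (ZMod p × ZMod p × ZMod p)).erase 0).card
      < (Finset.range (p ^ 3)).card := by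
    have hpos : 0 < p ^ 3 := pow_pos hp.pos 3
    rw [Finset.card_erase_of_mem (Finset.mem_univ _), Finset.card_univ, Fintype.card_prod,
      Fintype.card_prod, ZMod.card, Finset.card_range, show p * (p * p) = p ^ 3 by ring]
    omega
  obtain ⟨i, hi, j, hj, hij, h⟩ := Finset.exists_ne_map_eq_of_card_lt_of_maps_to hcard
    (f := fun n => (narayanaStep p)^[n] (0, 1, 1))
    (fun n _ => by simpa using narayanaStep_iterate_ne_zero p n)
  wlog hlt : i < j generalizing i j
  · exact this j hj i hi hij.symm h.symm (by omega)
  rw [Finset.mem_range] at hj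
  have hret : (narayanaStep p)^[j - i] (0, 1, 1) = (0, 1, 1) := by
    apply (narayanaStep_injective p).iterate i
    rw [← Function.iterate_add_apply, Nat.add_sub_cancel' hlt.le]
    exact h.symm
  have hle : k ≤ j - i := by
    refine hk.2 ⟨by omega, fun n => ?_⟩
    have hn : (narayanaStep p)^[n + (j - i)] (0, 1, 1) = (narayanaStep p)^[n] (0, 1, 1) := by
      rw [Function.iterate_add_apply, hret]
    rw [narayanaStep_iterate, narayanaStep_iterate] at hn
    exact (ZMod.natCast_eq_natCast_iff _ _ _).1 (congrArg Prod.fst hn)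
  omega
end

section
/- The minimal period of the Narayana sequence modulo 7 is 57, which equals p² + p + 1 for p = 7. -/
/-!
The recurrence has order three, so everything about the sequence modulo 7 is determined by three
consecutive residues. Hence 57 is a period as soon as `u₅₇, u₅₈, u₅₉` agree with the initial
values `0, 1, 1` modulo 7 (`narayana_add_modEq`). Conversely, any period `k` forces
`(u_k, u_{k+1}, u_{k+2}) ≡ (0, 1, 1)`, and computing the first terms shows that this does not
happen for `0 < k < 57` (`narayana_no_early_return`).
-/

/-- If three consecutive terms starting at index `k` agree with the initial values modulo `m`,
then `k` is a period modulo `m`. -/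
theorem narayana_add_modEq {m k : ℕ} (h0 : narayana k ≡ 0 [MOD m])
    (h1 : narayana (k + 1) ≡ 1 [MOD m]) (h2 : narayana (k + 2) ≡ 1 [MOD m]) :
    ∀ n, narayana (n + k) ≡ narayana n [MOD m]
  | 0 => by simpa [narayana] using h0
  | 1 => by simpa [narayana, add_comm] using h1
  | 2 => by simpa [narayana, add_comm] using h2
  | n + 3 => by
    have e : narayana (n + 3 + k) = narayana (n + 2 + k) + narayana (n + k) := by
      rw [show n + 3 + k = n + k + 3 by ring, show n + 2 + k = n + k + 2 by ring]
      rfl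
    rw [e]
    exact (narayana_add_modEq h0 h1 h2 (n + 2)).add (narayana_add_modEq h0 h1 h2 n)

theorem narayana_no_early_return : ∀ k < 57, 0 < k →
    ¬ (narayana k % 7 = 0 ∧ narayana (k + 1) % 7 = 1 ∧ narayana (k + 2) % 7 = 1) := by
  decide +kernel

/-- The minimal period of the Narayana sequence modulo 7 is 57. -/
theorem narayana_period_mod_7 :
    IsLeast {k | 0 < k ∧ ∀ n, narayana (n + k) ≡ narayana n [MOD 7]} 57 ∧
    (57 : ℕ) = 7 ^ 2 + 7 + 1 := by
  refine ⟨⟨⟨by norm_num, ?_⟩, ?_⟩, by norm_num⟩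
  · exact narayana_add_modEq (by decide +kernel) (by decide +kernel) (by decide +kernel)
  · rintro k ⟨hk, h⟩
    by_contra! hlt
    refine narayana_no_early_return k hlt hk ⟨?_, ?_, ?_⟩
    · simpa [narayana, Nat.ModEq] using h 0
    · simpa [narayana, Nat.ModEq, add_comm] using h 1
    · simpa [narayana, Nat.ModEq, add_comm] using h 2
end

section
/- The minimal period of the Narayana sequence modulo 47 is 46, which equals (p² − 1)/48 for p = 47; in particular the minimal period is a proper divisor of p² − 1. -/
theorem narayana_add_46 : ∀ n, narayana (n + 46) ≡ narayana n [MOD 47]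
  | 0 => by simp [narayana, Nat.ModEq]
  | 1 => by simp [narayana, Nat.ModEq]
  | 2 => by simp [narayana, Nat.ModEq]
  | n + 3 => (narayana_add_46 (n + 2)).add (narayana_add_46 n)

theorem narayana_no_smaller : ∀ k < 46, 0 < k →
    ¬ (narayana k ≡ 0 [MOD 47] ∧ narayana (k + 1) ≡ 1 [MOD 47] ∧
      narayana (k + 2) ≡ 1 [MOD 47]) := by
  intro k hlt hk
  interval_cases k <;> simp [narayana, Nat.ModEq]

/-- The minimal period of the Narayana sequence modulo 47 is 46. -/
theorem narayana_period_mod_47 :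
    IsLeast {k | 0 < k ∧ ∀ n, narayana (n + k) ≡ narayana n [MOD 47]} 46 ∧
    (46 : ℕ) = (47 ^ 2 - 1) / 48 ∧ (46 : ℕ) ∣ 47 ^ 2 - 1 ∧ (46 : ℕ) ≠ 47 ^ 2 - 1 := by
  refine ⟨⟨⟨by norm_num, narayana_add_46⟩, ?_⟩, by norm_num, by norm_num, by norm_num⟩
  rintro k ⟨hk, h⟩
  by_contra! hlt
  have h0 := h 0
  have h1 := h 1
  have h2 := h 2
  rw [Nat.zero_add] at h0
  rw [Nat.add_comm] at h1 h2
  exact narayana_no_smaller k hlt hk ⟨h0, h1, h2⟩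
end

section
/- The minimal period of the Narayana sequence modulo 97 is 3169, which equals (p² + p + 1)/3 for p = 97; in particular the minimal period is a proper divisor of p² + p + 1. -/
/-! The vectors `(u_n, u_{n+1}, u_{n+2})` modulo 97 form the orbit of `(0, 1, 1)` under the
companion matrix `M` of the recurrence. Repeated squaring shows `M ^ 3169 = 1`, so 3169 is a period
of the orbit (`narayanaMatrix_pow`). Since 3169 is prime and `(0, 1, 1)` is not fixed by `M`, the
minimal period of `(0, 1, 1)` is exactly 3169, and it divides every period of the sequence. -/

/-- The companion matrix of the recurrence, sending `(x, y, z)` to `(y, z, x + z)`. -/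
def narayanaMatrix : Matrix (Fin 3) (Fin 3) (ZMod 97) := !![0, 1, 0; 0, 0, 1; 1, 0, 1]

/-- Three consecutive terms of the Narayana sequence modulo 97. -/
def narayanaState (n : ℕ) : Fin 3 → ZMod 97 :=
  ![narayana n, narayana (n + 1), narayana (n + 2)]

/-- The binary expansion `3169 = 2048 + 1024 + 64 + 32 + 1` gives the exponents: each is twice
the previous one, plus the next binary digit. -/
theorem narayanaMatrix_pow : narayanaMatrix ^ 3169 = 1 := by
  have h1 : narayanaMatrix ^ 1 = !![0, 1, 0; 0, 0, 1; 1, 0, 1] := by rw [pow_one]; rfl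
  have h3 : narayanaMatrix ^ 3 = !![1, 0, 1; 1, 1, 1; 1, 1, 2] := by
    change narayanaMatrix ^ (1 + 1 + 1) = _; rw [pow_succ, pow_add, h1]; decide +kernel
  have h6 : narayanaMatrix ^ 6 = !![2, 1, 3; 3, 2, 4; 4, 3, 6] := by
    change narayanaMatrix ^ (3 + 3) = _; rw [pow_add, h3]; decide +kernel
  have h12 : narayanaMatrix ^ 12 = !![19, 13, 28; 28, 19, 41; 41, 28, 60] := by
    change narayanaMatrix ^ (6 + 6) = _; rw [pow_add, h6]; decide +kernel
  have h24 : narayanaMatrix ^ 24 = !![30, 17, 29; 29, 30, 46; 46, 29, 76] := by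
    change narayanaMatrix ^ (12 + 12) = _; rw [pow_add, h12]; decide +kernel
  have h49 : narayanaMatrix ^ 49 = !![73, 11, 91; 91, 73, 5; 5, 91, 78] := by
    change narayanaMatrix ^ (24 + 24 + 1) = _; rw [pow_succ, pow_add, h24]; decide +kernel
  have h99 : narayanaMatrix ^ 99 = !![22, 92, 15; 15, 22, 10; 10, 15, 32] := by
    change narayanaMatrix ^ (49 + 49 + 1) = _; rw [pow_succ, pow_add, h49]; decide +kernel
  have h198 : narayanaMatrix ^ 198 = !![74, 5, 81; 81, 74, 86; 86, 81, 63] := by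
    change narayanaMatrix ^ (99 + 99) = _; rw [pow_add, h99]; decide +kernel
  have h396 : narayanaMatrix ^ 396 = !![43, 26, 81; 81, 43, 10; 10, 81, 53] := by
    change narayanaMatrix ^ (198 + 198) = _; rw [pow_add, h198]; decide +kernel
  have h792 : narayanaMatrix ^ 792 = !![12, 67, 82; 82, 12, 52; 52, 82, 64] := by
    change narayanaMatrix ^ (396 + 396) = _; rw [pow_add, h396]; decide +kernel
  have h1584 : narayanaMatrix ^ 1584 = !![8, 87, 16; 16, 8, 6; 6, 16, 14] := by
    change narayanaMatrix ^ (792 + 792) = _; rw [pow_add, h792]; decide +kernel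
  change narayanaMatrix ^ (1584 + 1584 + 1) = _; rw [pow_succ, pow_add, h1584]; decide +kernel

theorem mulVec_narayanaState (n : ℕ) :
    narayanaMatrix.mulVec (narayanaState n) = narayanaState (n + 1) := by
  ext i
  fin_cases i <;>
    simp [narayanaMatrix, narayanaState, Matrix.mulVec, dotProduct, Fin.sum_univ_three, narayana,
      add_comm, add_left_comm]

theorem iterate_narayanaState (k n : ℕ) :
    narayanaMatrix.mulVec^[k] (narayanaState n) = narayanaState (n + k) := by
  induction k with
  | zero => rfl
  | succ k ih => rw [Function.iterate_succ_apply', ih, mulVec_narayanaState, add_assoc]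

theorem narayanaState_add_period (n : ℕ) : narayanaState (n + 3169) = narayanaState n := by
  have h : ∀ k (v : Fin 3 → ZMod 97),
      narayanaMatrix.mulVec^[k] v = (narayanaMatrix ^ k).mulVec v := by
    intro k v
    induction k with
    | zero => simp
    | succ k ih => rw [Function.iterate_succ_apply', ih, Matrix.mulVec_mulVec, pow_succ']
  rw [← iterate_narayanaState, h, narayanaMatrix_pow, Matrix.one_mulVec]

theorem minimalPeriod_narayanaState :
    Function.minimalPeriod narayanaMatrix.mulVec (narayanaState 0) = 3169 := by
  have : Fact (Nat.Prime 3169) := ⟨by norm_num⟩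
  refine Function.minimalPeriod_eq_prime ?_ ?_
  · rw [Function.IsPeriodicPt, Function.IsFixedPt, iterate_narayanaState,
      narayanaState_add_period]
  · intro h
    have h0 := congrFun ((mulVec_narayanaState 0).symm.trans h) 0
    revert h0
    decide +kernel

/-- The minimal period of the Narayana sequence modulo 97 is 3169. -/
theorem narayana_period_mod_97 :
    IsLeast {k | 0 < k ∧ ∀ n, narayana (n + k) ≡ narayana n [MOD 97]} 3169 ∧
    (3169 : ℕ) = (97 ^ 2 + 97 + 1) / 3 ∧ (3169 : ℕ) ∣ 97 ^ 2 + 97 + 1 ∧ (3169 : ℕ) ≠ 97 ^ 2 + 97 + 1 := by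
  refine ⟨⟨⟨by norm_num, fun n => ?_⟩, ?_⟩, by norm_num, by norm_num, by norm_num⟩
  · rw [← ZMod.natCast_eq_natCast_iff]
    exact congrFun (narayanaState_add_period n) 0
  · rintro k ⟨hk, h⟩
    have hstate : narayanaState (0 + k) = narayanaState 0 := by
      simp only [← ZMod.natCast_eq_natCast_iff] at h
      have h0 := h 0
      have h1 := h (0 + 1)
      have h2 := h (0 + 2)
      rw [Nat.add_right_comm] at h1 h2
      simp only [narayanaState, h0, h1, h2]
    have hp : Function.IsPeriodicPt narayanaMatrix.mulVec k (narayanaState 0) :=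
      (iterate_narayanaState k 0).trans hstate
    have hdvd := hp.minimalPeriod_dvd
    rw [minimalPeriod_narayanaState] at hdvd
    exact Nat.le_of_dvd hk hdvd
end
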